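/- Let C = ⊕_{d∈ℤ} C_d be a finite-dimensional ℤ-graded vector space over ℚ (so only finitely many C_d are nonzero), and let ∂̂ = Σ_{k≥0} ∂_k be a linear map C → C with ∂̂ ∘ ∂̂ = 0, where each ∂_k is a linear map of degree −1+2k (the sum is automatically finite). Then there exists a finite decreasing chain of graded subspaces C = F_{a} ⊇ F_{a+1} ⊇ ⋯ ⊇ F_{b} = 0, each invariant under ∂̂, such that for every ℓ the homology of the quotient complex (F_ℓ/F_{ℓ+1}, induced by ∂̂) is concentrated in degree ℓ+1 and is isomorphic there to H_{ℓ+1}(C, ∂₀) := ker(∂₀ : C_{ℓ+1} → C_ℓ)/∂₀(C_{ℓ+2}). -/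

import Mathlib

namespace GradedDifferential

variable {V : Type*} [AddCommGroup V] [Module ℚ V] {C : ℤ → Submodule ℚ V}

/-- The sum of the components of degree greater than `ℓ`. -/
def above (C : ℤ → Submodule ℚ V) (ℓ : ℤ) : Submodule ℚ V :=
  ⨆ d : ℤ, ⨆ _ : ℓ < d, C d

/-- The subspace consisting of all components of degree greater than `ℓ` and of the image of the
component of degree `ℓ + 1` under `δ₀`. -/
def filtration (C : ℤ → Submodule ℚ V) (δ₀ : V →ₗ[ℚ] V) (ℓ : ℤ) : Submodule ℚ V :=
  above C ℓ ⊔ (C (ℓ + 1)).map δ₀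

theorem le_above {ℓ d : ℤ} (h : ℓ < d) : C d ≤ above C ℓ :=
  le_iSup₂_of_le d h le_rfl

theorem above_le_iff {ℓ : ℤ} {S : Submodule ℚ V} :
    above C ℓ ≤ S ↔ ∀ d, ℓ < d → C d ≤ S := by
  simp only [above, iSup_le_iff]

theorem above_anti {ℓ m : ℤ} (h : ℓ ≤ m) : above C m ≤ above C ℓ :=
  above_le_iff.2 fun _ hd => le_above (h.trans_lt hd)

theorem above_eq_sup (ℓ : ℤ) : above C ℓ = C (ℓ + 1) ⊔ above C (ℓ + 1) := by
  apply le_antisymm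
  · refine above_le_iff.2 fun d hd => ?_
    rcases (show ℓ + 1 ≤ d from hd).eq_or_lt with rfl | h
    · exact le_sup_left
    · exact (le_above h).trans le_sup_right
  · exact sup_le (le_above (by lia)) (above_anti (by lia))

/-- The projections onto the components of an internal direct sum. -/
theorem exists_projection (hC : DirectSum.IsInternal C) :
    ∃ π : ℤ → V →ₗ[ℚ] V, (∀ d, ∀ x ∈ C d, π d x = x) ∧
      ∀ d e, e ≠ d → ∀ x ∈ C e, π d x = 0 := by
  let E := LinearEquiv.ofBijective (DirectSum.coeLinearMap C) hC
  have hE : ∀ d, ∀ x (hx : x ∈ C d), E.symm x = DirectSum.lof ℚ ℤ (fun i => C i) d ⟨x, hx⟩ := by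
    intro d x hx
    rw [LinearEquiv.symm_apply_eq]
    exact (DirectSum.coeLinearMap_lof C d ⟨x, hx⟩).symm
  refine ⟨fun d => (C d).subtype ∘ₗ DirectSum.component ℚ ℤ (fun i => C i) d ∘ₗ
    E.symm.toLinearMap, ?_, ?_⟩
  · intro d x hx
    simp [hE d x hx, DirectSum.component.lof_self]
  · intro d e hed x hx
    simp [hE e x hx, DirectSum.component.of, hed]

/-- A finite-dimensional graded vector space is concentrated in a bounded range of degrees. -/
theorem exists_eq_bot_of_le_natAbs [FiniteDimensional ℚ V] (hC : DirectSum.IsInternal C) :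
    ∃ n : ℕ, ∀ d : ℤ, n ≤ d.natAbs → C d = ⊥ := by
  have hfin : {d | C d ≠ ⊥}.Finite :=
    WellFoundedGT.finite_ne_bot_of_iSupIndep hC.submodule_iSupIndep
  obtain ⟨n, hn⟩ := (hfin.image Int.natAbs).bddAbove
  refine ⟨n + 1, fun d hd => ?_⟩
  by_contra h
  have := hn ⟨d, h, rfl⟩
  lia

theorem above_le_ker_projection {π : ℤ → V →ₗ[ℚ] V}
    (hπ : ∀ d e, e ≠ d → ∀ x ∈ C e, π d x = 0) {ℓ d : ℤ} (h : d ≤ ℓ) :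
    above C ℓ ≤ LinearMap.ker (π d) :=
  above_le_iff.2 fun e he x hx => hπ d e (by lia) x hx

/-- The part of `∑ᶠ k, D k` of degree greater than `-1` raises the degree. -/
theorem sub_mem_above [FiniteDimensional ℚ V] (hC : DirectSum.IsInternal C)
    {D : ℕ → V →ₗ[ℚ] V}
    (hdeg : ∀ (k : ℕ) (d : ℤ), ∀ x ∈ C d, D k x ∈ C (d - 1 + 2 * (k : ℤ)))
    {d : ℤ} {x : V} (hx : x ∈ C d) : (∑ᶠ k, D k) x - D 0 x ∈ above C d := by
  obtain ⟨n, hn⟩ := exists_eq_bot_of_le_natAbs hC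
  have hzero : ∀ k, n + 1 ≤ k → D k = 0 := by
    intro k hk
    have htop : (⊤ : Submodule ℚ V) ≤ LinearMap.ker (D k) := by
      rw [← hC.submodule_iSup_eq_top]
      refine iSup_le fun e y hy => ?_
      rw [LinearMap.mem_ker]
      by_cases he : n ≤ e.natAbs
      · rw [hn e he, Submodule.mem_bot] at hy
        rw [hy, map_zero]
      · have h := hdeg k e y hy
        rwa [hn _ (by lia), Submodule.mem_bot] at h
    ext y
    exact htop (Submodule.mem_top (x := y))
  rw [finsum_eq_sum_of_support_subset (s := Finset.range (n + 1)) D, Finset.sum_range_succ',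
    LinearMap.add_apply, add_sub_cancel_right, LinearMap.sum_apply]
  · refine Submodule.sum_mem _ fun k _ => ?_
    exact le_above (by push_cast; lia) (hdeg (k + 1) d x hx)
  · intro k hk
    simp only [Finset.coe_range, Set.mem_Iio]
    by_contra h
    exact hk (hzero k (by lia))

section Filtration

variable {δ δ₀ : V →ₗ[ℚ] V}

theorem map_above_le (hdeg : ∀ d, ∀ x ∈ C d, δ₀ x ∈ C (d - 1)) (ℓ : ℤ) :
    above C (ℓ + 1) ≤ (above C ℓ).comap δ₀ :=
  above_le_iff.2 fun d hd x hx => le_above (by lia) (hdeg d x hx)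

theorem sub_mem_above_succ (hsub : ∀ d, ∀ x ∈ C d, δ x - δ₀ x ∈ above C d) (ℓ : ℤ) :
    above C ℓ ≤ (above C (ℓ + 1)).comap (δ - δ₀) :=
  above_le_iff.2 fun d hd x hx => above_anti hd (hsub d x hx)

/-- The lowest-degree part of a differential squares to zero. -/
theorem lowest_comp_lowest (hC : DirectSum.IsInternal C)
    (hdeg : ∀ d, ∀ x ∈ C d, δ₀ x ∈ C (d - 1))
    (hsub : ∀ d, ∀ x ∈ C d, δ x - δ₀ x ∈ above C d) (hδ : ∀ x, δ (δ x) = 0)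
    {d : ℤ} {x : V} (hx : x ∈ C d) : δ₀ (δ₀ x) = 0 := by
  obtain ⟨π, hπ, hπ'⟩ := exists_projection hC
  have hmem := hdeg _ _ (hdeg d x hx)
  have h₁ : δ (δ₀ x) - δ₀ (δ₀ x) ∈ above C (d - 2) :=
    above_anti (by lia) (hsub _ _ (hdeg d x hx))
  have h₂ : δ₀ (δ x - δ₀ x) ∈ above C (d - 2) :=
    above_anti (by lia)
      (map_above_le hdeg (d - 1) (above_anti (by lia) (hsub d x hx)))
  have h₃ : (δ - δ₀) (δ x - δ₀ x) ∈ above C (d - 2) :=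
    above_anti (by lia) (sub_mem_above_succ hsub d (hsub d x hx))
  have h₄ : δ₀ (δ₀ x) ∈ above C (d - 2) := by
    have := Submodule.neg_mem _ (Submodule.add_mem _ (Submodule.add_mem _ h₁ h₂) h₃)
    convert this using 1
    simp only [LinearMap.sub_apply, map_sub, hδ]
    abel
  rw [← hπ _ _ hmem]
  exact above_le_ker_projection hπ' (by lia) h₄

theorem filtration_succ_le (hdeg : ∀ d, ∀ x ∈ C d, δ₀ x ∈ C (d - 1)) (ℓ : ℤ) :
    filtration C δ₀ (ℓ + 1) ≤ above C ℓ := by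
  refine sup_le (above_anti (by lia)) (Submodule.map_le_iff_le_comap.2 fun x hx => ?_)
  exact le_above (by lia) (hdeg _ x hx)

theorem filtration_graded (hdeg : ∀ d, ∀ x ∈ C d, δ₀ x ∈ C (d - 1)) (ℓ : ℤ) :
    filtration C δ₀ ℓ = ⨆ d : ℤ, filtration C δ₀ ℓ ⊓ C d := by
  refine le_antisymm (sup_le (above_le_iff.2 fun d hd => ?_) ?_) (iSup_le fun _ => inf_le_left)
  · exact le_iSup_of_le d (le_inf ((le_above hd).trans le_sup_left) le_rfl)
  · refine le_iSup_of_le ℓ (le_inf le_sup_right (Submodule.map_le_iff_le_comap.2 fun x hx => ?_))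
    simpa using hdeg _ x hx

theorem filtration_invariant (hdeg : ∀ d, ∀ x ∈ C d, δ₀ x ∈ C (d - 1))
    (hsub : ∀ d, ∀ x ∈ C d, δ x - δ₀ x ∈ above C d)
    (hsq : ∀ d, ∀ x ∈ C d, δ₀ (δ₀ x) = 0) (ℓ : ℤ) :
    filtration C δ₀ ℓ ≤ (filtration C δ₀ ℓ).comap δ := by
  refine sup_le (above_le_iff.2 fun d hd x hx => ?_) (Submodule.map_le_iff_le_comap.2 ?_)
  · rw [Submodule.mem_comap, ← sub_add_cancel (δ x) (δ₀ x)]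
    refine Submodule.add_mem _ (le_sup_left (a := above C ℓ) (above_anti hd.le (hsub d x hx))) ?_
    rcases (show ℓ + 1 ≤ d from hd).eq_or_lt with rfl | h
    · exact le_sup_right (a := above C ℓ) (Submodule.mem_map_of_mem hx)
    · exact le_sup_left (a := above C ℓ) (le_above (by lia) (hdeg d x hx))
  · intro x hx
    have h := hsub _ _ (hdeg _ x hx)
    rw [hsq _ x hx, sub_zero, add_sub_cancel_right] at h
    exact le_sup_left (a := above C ℓ) h

/-- The differential maps the lowest-degree part of one filtration step into the next step. -/
theorem map_lowest_le_filtration_succ (hdeg : ∀ d, ∀ x ∈ C d, δ₀ x ∈ C (d - 1))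
    (hsub : ∀ d, ∀ x ∈ C d, δ x - δ₀ x ∈ above C d)
    (hsq : ∀ d, ∀ x ∈ C d, δ₀ (δ₀ x) = 0) (hδ : ∀ x, δ (δ x) = 0) (ℓ : ℤ) :
    (C (ℓ + 1)).map δ₀ ≤ (filtration C δ₀ (ℓ + 1)).comap δ := by
  refine Submodule.map_le_iff_le_comap.2 fun x hx => ?_
  have h := filtration_invariant hdeg hsub hsq (ℓ + 1)
    (le_sup_left (a := above C (ℓ + 1)) (hsub _ x hx))
  rw [Submodule.mem_comap, map_sub, hδ, zero_sub] at h
  exact (Submodule.neg_mem_iff (filtration C δ₀ (ℓ + 1))).1 h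

theorem filtration_eq_sup (hdeg : ∀ d, ∀ x ∈ C d, δ₀ x ∈ C (d - 1)) (ℓ : ℤ) :
    filtration C δ₀ ℓ = C (ℓ + 1) ⊔ ((C (ℓ + 1)).map δ₀ ⊔ filtration C δ₀ (ℓ + 1)) := by
  apply le_antisymm
  · refine sup_le ?_ (le_sup_left.trans le_sup_right)
    rw [above_eq_sup]
    exact sup_le_sup_left (le_sup_left.trans le_sup_right) _
  · exact sup_le ((le_above (by lia)).trans le_sup_left)
      (sup_le le_sup_right ((filtration_succ_le hdeg ℓ).trans le_sup_left))

/-- The boundaries of the quotient complex of two consecutive filtration steps. -/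
theorem map_filtration_sup_eq (hdeg : ∀ d, ∀ x ∈ C d, δ₀ x ∈ C (d - 1))
    (hsub : ∀ d, ∀ x ∈ C d, δ x - δ₀ x ∈ above C d)
    (hsq : ∀ d, ∀ x ∈ C d, δ₀ (δ₀ x) = 0) (hδ : ∀ x, δ (δ x) = 0) (ℓ : ℤ) :
    (filtration C δ₀ ℓ).map δ ⊔ filtration C δ₀ (ℓ + 1) =
      (C (ℓ + 1)).map δ₀ ⊔ filtration C δ₀ (ℓ + 1) := by
  have hF : ∀ x ∈ C (ℓ + 1), δ x - δ₀ x ∈ filtration C δ₀ (ℓ + 1) := fun x hx =>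
    le_sup_left (a := above C (ℓ + 1)) (hsub _ x hx)
  apply le_antisymm
  · refine sup_le (Submodule.map_le_iff_le_comap.2 ?_) le_sup_right
    rw [filtration_eq_sup hdeg ℓ]
    refine sup_le (fun x hx => ?_) (sup_le ?_ ?_)
    · rw [Submodule.mem_comap, ← add_sub_cancel (δ₀ x) (δ x)]
      exact Submodule.add_mem_sup (Submodule.mem_map_of_mem hx) (hF x hx)
    · exact (map_lowest_le_filtration_succ hdeg hsub hsq hδ ℓ).trans
        (Submodule.comap_mono le_sup_right)
    · exact (filtration_invariant hdeg hsub hsq (ℓ + 1)).trans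
        (Submodule.comap_mono le_sup_right)
  · refine sup_le (Submodule.map_le_iff_le_comap.2 fun x hx => ?_) le_sup_right
    rw [Submodule.mem_comap, ← sub_sub_cancel (δ x) (δ₀ x), sub_eq_add_neg]
    exact Submodule.add_mem_sup
      (Submodule.mem_map_of_mem (le_sup_left (a := above C ℓ) (le_above (by lia) hx)))
      (Submodule.neg_mem _ (hF x hx))

/-- The cycles of the quotient complex of two consecutive filtration steps. -/
theorem filtration_inf_comap_eq (hC : DirectSum.IsInternal C)
    (hdeg : ∀ d, ∀ x ∈ C d, δ₀ x ∈ C (d - 1))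
    (hsub : ∀ d, ∀ x ∈ C d, δ x - δ₀ x ∈ above C d)
    (hsq : ∀ d, ∀ x ∈ C d, δ₀ (δ₀ x) = 0) (hδ : ∀ x, δ (δ x) = 0) (ℓ : ℤ) :
    filtration C δ₀ ℓ ⊓ (filtration C δ₀ (ℓ + 1)).comap δ =
      (C (ℓ + 1) ⊓ LinearMap.ker δ₀) ⊔ ((C (ℓ + 1)).map δ₀ ⊔ filtration C δ₀ (ℓ + 1)) := by
  have hW : (C (ℓ + 1)).map δ₀ ⊔ filtration C δ₀ (ℓ + 1) ≤ (filtration C δ₀ (ℓ + 1)).comap δ :=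
    sup_le (map_lowest_le_filtration_succ hdeg hsub hsq hδ ℓ)
      (filtration_invariant hdeg hsub hsq (ℓ + 1))
  have hF : ∀ x ∈ C (ℓ + 1), δ x - δ₀ x ∈ filtration C δ₀ (ℓ + 1) := fun x hx =>
    le_sup_left (a := above C (ℓ + 1)) (hsub _ x hx)
  rw [filtration_eq_sup hdeg ℓ]
  apply le_antisymm
  · rintro x ⟨hx, hδx⟩
    obtain ⟨c, hc, w, hw, rfl⟩ := Submodule.mem_sup.1 hx
    refine Submodule.add_mem_sup ⟨hc, ?_⟩ hw
    have h₁ : δ c ∈ filtration C δ₀ (ℓ + 1) := by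
      simpa using Submodule.sub_mem _ hδx (hW hw)
    have h₂ : δ₀ c ∈ filtration C δ₀ (ℓ + 1) := by
      simpa using Submodule.sub_mem _ h₁ (hF c hc)
    obtain ⟨π, hπ, hπ'⟩ := exists_projection hC
    have h₃ : δ₀ c ∈ C ℓ := by simpa using hdeg _ c hc
    rw [SetLike.mem_coe, LinearMap.mem_ker, ← hπ _ _ h₃]
    exact above_le_ker_projection hπ' le_rfl (filtration_succ_le hdeg ℓ h₂)
  · refine sup_le (le_inf (inf_le_left.trans le_sup_left) ?_) (le_inf le_sup_right hW)
    rintro x ⟨hx, hx'⟩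
    have h := hF x hx
    rwa [LinearMap.mem_ker.1 hx', sub_zero] at h

/-- Off degree `ℓ + 1`, the step `ℓ` of the filtration consists of boundaries modulo step
`ℓ + 1`. -/
theorem filtration_inf_component_le (hC : DirectSum.IsInternal C)
    (hdeg : ∀ d, ∀ x ∈ C d, δ₀ x ∈ C (d - 1)) {ℓ d : ℤ} (hd : d ≠ ℓ + 1) :
    filtration C δ₀ ℓ ⊓ C d ≤ (C (ℓ + 1)).map δ₀ ⊔ filtration C δ₀ (ℓ + 1) := by
  rcases lt_or_ge ℓ d with h | h
  · exact inf_le_right.trans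
      ((le_above (by lia)).trans (le_sup_left.trans le_sup_right))
  · obtain ⟨π, hπ, hπ'⟩ := exists_projection hC
    rintro x ⟨hx, hxd⟩
    obtain ⟨y, hy, b, hb, rfl⟩ := Submodule.mem_sup.1 hx
    have hbℓ : b ∈ C ℓ := by
      obtain ⟨c, hc, rfl⟩ := hb
      simpa using hdeg _ c hc
    have hproj : π d (y + b) = π d b := by
      rw [map_add, LinearMap.mem_ker.1 (above_le_ker_projection hπ' h hy), zero_add]
    rw [← hπ d _ hxd, hproj]
    rcases eq_or_ne ℓ d with rfl | hne
    · rw [hπ _ _ hbℓ]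
      exact Submodule.mem_sup_left hb
    · rw [hπ' _ _ hne _ hbℓ]
      exact Submodule.zero_mem _

/-- In degree `ℓ + 1`, the boundaries of the quotient complex are the images under `δ₀`. -/
theorem component_inf_boundaries_le (hC : DirectSum.IsInternal C)
    (hdeg : ∀ d, ∀ x ∈ C d, δ₀ x ∈ C (d - 1)) (ℓ : ℤ) :
    C (ℓ + 1) ⊓ ((C (ℓ + 1)).map δ₀ ⊔ filtration C δ₀ (ℓ + 1)) ≤ (C (ℓ + 2)).map δ₀ := by
  obtain ⟨π, hπ, hπ'⟩ := exists_projection hC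
  rintro x ⟨hx, hx'⟩
  suffices h : (C (ℓ + 1)).map δ₀ ⊔ filtration C δ₀ (ℓ + 1) ≤
      ((C (ℓ + 2)).map δ₀).comap (π (ℓ + 1)) by
    simpa only [Submodule.mem_comap, hπ _ _ hx] using h hx'
  have hℓ : ℓ + 1 + 1 = ℓ + 2 := by ring
  refine sup_le (Submodule.map_le_iff_le_comap.2 fun y hy => ?_) (sup_le (fun y hy => ?_) ?_)
  · rw [Submodule.mem_comap, Submodule.mem_comap, hπ' _ _ (by lia) _ (hdeg _ y hy)]
    exact Submodule.zero_mem _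
  · rw [Submodule.mem_comap, LinearMap.mem_ker.1 (above_le_ker_projection hπ' le_rfl hy)]
    exact Submodule.zero_mem _
  · rw [hℓ]
    refine Submodule.map_le_iff_le_comap.2 fun y hy => ?_
    have hmem : δ₀ y ∈ C (ℓ + 1) := by
      have := hdeg _ y hy
      rwa [show ℓ + 2 - 1 = ℓ + 1 by ring] at this
    rw [Submodule.mem_comap, Submodule.mem_comap, hπ _ _ hmem]
    exact Submodule.mem_map_of_mem hy

end Filtration

end GradedDifferential

open GradedDifferential in
/-- Filtration formulation of Lemma 5.4: there is a finite decreasing chain of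
`∂̂`-invariant graded subspaces `⊤ = F a ⊇ ⋯ ⊇ F b = ⊥` such that the homology of
each quotient complex `F ℓ / F (ℓ+1)` is concentrated in degree `ℓ+1` and is
isomorphic there to `H_{ℓ+1}(C, ∂₀)`. -/
theorem stmt_4 {V : Type*} [AddCommGroup V] [Module ℚ V] [FiniteDimensional ℚ V]
    (C : ℤ → Submodule ℚ V) (hC : DirectSum.IsInternal C)
    (D : ℕ → V →ₗ[ℚ] V)
    (hdeg : ∀ (k : ℕ) (d : ℤ), ∀ x ∈ C d, D k x ∈ C (d - 1 + 2 * (k : ℤ)))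
    (Dhat : V →ₗ[ℚ] V) (hDhat : Dhat = ∑ᶠ k, D k)
    (hDD : Dhat ∘ₗ Dhat = 0) :
    ∃ (a b : ℤ) (F : ℤ → Submodule ℚ V),
      a ≤ b ∧ F a = ⊤ ∧ F b = ⊥ ∧
      (∀ ℓ : ℤ, F (ℓ + 1) ≤ F ℓ) ∧
      -- each `F ℓ` is a graded subspace
      (∀ ℓ : ℤ, F ℓ = ⨆ d : ℤ, F ℓ ⊓ C d) ∧
      -- each `F ℓ` is invariant under `∂̂`
      (∀ ℓ : ℤ, ∀ x ∈ F ℓ, Dhat x ∈ F ℓ) ∧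
      (∀ ℓ : ℤ,
        -- homology of the quotient complex `F ℓ / F (ℓ+1)` is concentrated in
        -- degree `ℓ+1`: any cycle lying in the sum of the degree-`d` parts with
        -- `d ≠ ℓ+1` is a boundary
        (((F ℓ ⊓ (F (ℓ + 1)).comap Dhat) ⊓
            ((⨆ d : ℤ, ⨆ _ : d ≠ ℓ + 1, F ℓ ⊓ C d) ⊔ F (ℓ + 1)))
          ≤ (F ℓ).map Dhat ⊔ F (ℓ + 1)) ∧
        -- and the homology of the quotient complex is isomorphic to
        -- `H_{ℓ+1}(C, ∂₀) = ker(∂₀ : C_{ℓ+1} → C_ℓ)/∂₀(C_{ℓ+2})`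
        Nonempty
          ((↥(F ℓ ⊓ (F (ℓ + 1)).comap Dhat) ⧸
              (((F ℓ).map Dhat ⊔ F (ℓ + 1)).comap
                (F ℓ ⊓ (F (ℓ + 1)).comap Dhat).subtype)) ≃ₗ[ℚ]
            (↥(C (ℓ + 1) ⊓ LinearMap.ker (D 0)) ⧸
              (((C (ℓ + 2)).map (D 0)).comap
                (C (ℓ + 1) ⊓ LinearMap.ker (D 0)).subtype)))) := by
  have hdeg₀ : ∀ d, ∀ x ∈ C d, D 0 x ∈ C (d - 1) := fun d x hx => by
    simpa using hdeg 0 d x hx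
  have hsub : ∀ d, ∀ x ∈ C d, Dhat x - D 0 x ∈ above C d := fun d x hx => by
    rw [hDhat]
    exact sub_mem_above hC hdeg hx
  have hδ : ∀ x, Dhat (Dhat x) = 0 := fun x => LinearMap.congr_fun hDD x
  have hsq : ∀ d, ∀ x ∈ C d, D 0 (D 0 x) = 0 := fun d x hx =>
    lowest_comp_lowest hC hdeg₀ hsub hδ hx
  obtain ⟨n, hn⟩ := exists_eq_bot_of_le_natAbs hC
  refine ⟨-n, n, filtration C (D 0), by lia, ?_, ?_,
    fun ℓ => (filtration_succ_le hdeg₀ ℓ).trans le_sup_left, filtration_graded hdeg₀,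
    fun ℓ x hx => filtration_invariant hdeg₀ hsub hsq ℓ hx, fun ℓ => ⟨?_, ?_⟩⟩
  · rw [eq_top_iff, ← hC.submodule_iSup_eq_top]
    refine iSup_le fun d => ?_
    by_cases hd : -(n : ℤ) < d
    · exact (le_above hd).trans le_sup_left
    · rw [hn d (by lia)]
      exact bot_le
  · rw [eq_bot_iff]
    refine sup_le (above_le_iff.2 fun d hd => ?_) ?_
    · rw [hn d (by lia)]
    · rw [hn _ (by lia), Submodule.map_bot]
  · rw [map_filtration_sup_eq hdeg₀ hsub hsq hδ]
    exact inf_le_right.trans (sup_le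
      (iSup₂_le fun d hd => filtration_inf_component_le hC hdeg₀ hd) le_sup_right)
  · rw [map_filtration_sup_eq hdeg₀ hsub hsq hδ,
      filtration_inf_comap_eq hC hdeg₀ hsub hsq hδ]
    refine ⟨(LinearMap.quotientInfEquivSupQuotient _ _).symm.trans
      (Submodule.quotEquivOfEq _ _ ?_)⟩
    ext ⟨x, hx⟩
    simp only [Submodule.mem_comap, Submodule.subtype_apply, Submodule.mem_inf]
    refine ⟨fun h => component_inf_boundaries_le hC hdeg₀ ℓ ⟨hx.1, h.2⟩, fun h => ⟨hx, ?_⟩⟩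
    refine Submodule.mem_sup_right (Submodule.mem_sup_right ?_)
    rwa [show ℓ + 1 + 1 = ℓ + 2 by ring]
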